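/- Let f : (ℝ^n, 0) → (ℝ, 0) be a real analytic function germ such that 0 is a singular point of f (i.e. the gradient of f vanishes at 0). Then the set of singular points of f is contained in f⁻¹(0) as germs at 0; that is, there is a neighbourhood U of 0 such that every point x ∈ U with ∇f(x) = 0 satisfies f(x) = 0. -/

import Mathlib

open TensorProduct in
lemma Derivation.exists_extension_of_charZero {R K : Type*} [CommRing R] [Field K] [CharZero K]
    [Algebra R K] (hinj : Function.Injective (algebraMap R K)) (d : Derivation ℤ R K) :
    ∃ D : Derivation ℤ K K, ∀ r, D (algebraMap R K r) = d r := by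
  have : IsDomain R := hinj.isDomain _
  have : FaithfulSMul R K := (faithfulSMul_iff_algebraMap_injective R K).2 hinj
  let L := FractionRing R
  let _ : Algebra L K := FractionRing.liftAlgebra R K
  have : IsScalarTower R L K := FractionRing.isScalarTower_liftAlgebra R K
  have : CharZero L := (algebraMap L K).charZero
  obtain ⟨s, hs⟩ := exists_isTranscendenceBasis L K
  have := hs.isAlgebraic_field
  have : Algebra.FormallySmooth L K :=
    Algebra.FormallySmooth.of_algebraicIndependent_of_isSeparable hs.1
  have : Algebra.FormallySmooth R L :=
    Algebra.FormallySmooth.of_isLocalization (nonZeroDivisors R)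
  have : Algebra.FormallySmooth R K := Algebra.FormallySmooth.comp R L K
  have hker : LinearMap.ker (KaehlerDifferential.mapBaseChange ℤ R K) = ⊥ := by
    refine LinearMap.ker_eq_bot'.2 fun x hx => ?_
    obtain ⟨x, rfl⟩ := (Algebra.H1Cotangent.exact_δ_mapBaseChange ℤ R K x).mp hx
    rw [Subsingleton.elim x 0, map_zero]
  obtain ⟨φ, hφ⟩ := LinearMap.exists_leftInverse_of_injective _ hker
  let ψ : K ⊗[R] Ω[R⁄ℤ] →ₗ[K] K := d.liftKaehlerDifferential.liftBaseChange K
  refine ⟨(ψ ∘ₗ φ).compDer (KaehlerDifferential.D ℤ K), fun r => ?_⟩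
  have h1 : KaehlerDifferential.mapBaseChange ℤ R K (1 ⊗ₜ KaehlerDifferential.D ℤ R r) =
      KaehlerDifferential.D ℤ K (algebraMap R K r) := by
    simp
  have h2 := LinearMap.congr_fun hφ (1 ⊗ₜ KaehlerDifferential.D ℤ R r)
  simp only [LinearMap.comp_apply, h1, LinearMap.id_apply] at h2
  simp [h2, ψ]
open Filter Topology

lemma AnalyticAt.eventuallyEq_const_mul_of_fderiv {E : Type*} [NormedAddCommGroup E]
    [NormedSpace ℝ E] [CompleteSpace E] {f g : E → ℝ} {x : E} (hf : AnalyticAt ℝ f x)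
    (hg : AnalyticAt ℝ g x) (hg0 : ¬ ∀ᶠ y in 𝓝 x, g y = 0)
    (h : ∀ᶠ y in 𝓝 x, g y • fderiv ℝ f y = f y • fderiv ℝ g y) :
    ∃ c : ℝ, ∀ᶠ y in 𝓝 x, f y = c * g y := by
  obtain ⟨r, hr, hball⟩ := Metric.eventually_nhds_iff_ball.1
    ((hf.eventually_analyticAt.and hg.eventually_analyticAt).and h)
  obtain ⟨y, hy, hgy⟩ : ∃ y ∈ Metric.ball x r, g y ≠ 0 := by
    by_contra! hcon
    exact hg0 (Metric.eventually_nhds_iff_ball.2 ⟨r, hr, hcon⟩)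
  have hne : ∀ᶠ z in 𝓝 y, g z ≠ 0 ∧ z ∈ Metric.ball x r :=
    ((hball y hy).1.2.continuousAt.eventually_ne hgy).and (Metric.isOpen_ball.mem_nhds hy)
  obtain ⟨s, hs, hs'⟩ := Metric.eventually_nhds_iff_ball.1 hne
  have hd : ∀ z ∈ Metric.ball y s, HasFDerivAt (fun z => f z / g z) (0 : E →L[ℝ] ℝ) z := by
    intro z hz
    obtain ⟨hgz, hzr⟩ := hs' z hz
    obtain ⟨⟨hfa, hga⟩, he⟩ := hball z hzr
    have hinv := (hasDerivAt_inv hgz).comp_hasFDerivAt z hga.differentiableAt.hasFDerivAt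
    have hdiv := HasFDerivAt.mul hfa.differentiableAt.hasFDerivAt hinv
    refine HasFDerivAt.congr_fderiv hdiv (ContinuousLinearMap.ext fun v => ?_)
    have hv := congrArg (fun L : E →L[ℝ] ℝ => L v) he
    simp only [smul_apply, smul_eq_mul] at hv
    simp only [add_apply, smul_apply, smul_eq_mul,
      zero_apply, Function.comp_apply]
    field_simp
    linarith
  have hconst : ∀ z ∈ Metric.ball y s, f z / g z = f y / g y := by
    intro z hz
    refine (convex_ball y s).is_const_of_fderivWithin_eq_zero (𝕜 := ℝ)
      (fun w hw => (hd w hw).differentiableAt.differentiableWithinAt) ?_ hz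
      (Metric.mem_ball_self hs)
    intro w hw
    rw [fderivWithin_of_isOpen Metric.isOpen_ball hw]
    exact (hd w hw).fderiv
  refine ⟨f y / g y, ?_⟩
  have han : AnalyticOnNhd ℝ (fun z => f z - f y / g y * g z) (Metric.ball x r) :=
    fun z hz => (hball z hz).1.1.sub (analyticAt_const.mul (hball z hz).1.2)
  have := han.eqOn_zero_of_preconnected_of_eventuallyEq_zero
    (convex_ball x r).isPreconnected hy (by
      filter_upwards [Metric.ball_mem_nhds y hs] with z hz
      have h1 := hconst z hz
      have h2 := (hs' z hz).1
      rw [div_eq_iff h2] at h1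
      simp [h1])
  filter_upwards [Metric.ball_mem_nhds x hr] with z hz
  exact sub_eq_zero.1 (this hz)

variable {ι : Type*} (U : Ultrafilter ι) {n : ℕ}

/-- The value of `g` at `x`, in the ultrapower of the real numbers. -/
abbrev germAlong {E : Type*} (x : ι → E) (g : E → ℝ) : Germ (U : Filter ι) ℝ :=
  ((fun i => g (x i) : ι → ℝ) : Germ (U : Filter ι) ℝ)

/-- The ring of values at the infinitesimal point `x` of the germs of analytic functions. -/
def analyticValues (x : ι → Fin n → ℝ) : Subring (Germ (U : Filter ι) ℝ) where
  carrier := {a | ∃ g : (Fin n → ℝ) → ℝ, AnalyticAt ℝ g 0 ∧ germAlong U x g = a}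
  mul_mem' := by
    rintro _ _ ⟨g, hg, rfl⟩ ⟨h, hh, rfl⟩
    exact ⟨fun y => g y * h y, hg.mul hh, rfl⟩
  one_mem' := ⟨fun _ => 1, analyticAt_const, rfl⟩
  add_mem' := by
    rintro _ _ ⟨g, hg, rfl⟩ ⟨h, hh, rfl⟩
    exact ⟨fun y => g y + h y, hg.add hh, rfl⟩
  zero_mem' := ⟨fun _ => 0, analyticAt_const, rfl⟩
  neg_mem' := by
    rintro _ ⟨g, hg, rfl⟩
    exact ⟨fun y => - g y, hg.neg, rfl⟩

/-- The partial derivative in the coordinate `j`. -/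
noncomputable def coordDeriv (j : Fin n) (g : (Fin n → ℝ) → ℝ) (y : Fin n → ℝ) : ℝ :=
  fderiv ℝ g y (Pi.single j 1)

lemma AnalyticAt.coordDeriv {g : (Fin n → ℝ) → ℝ} {y : Fin n → ℝ} (hg : AnalyticAt ℝ g y)
    (j : Fin n) : AnalyticAt ℝ (coordDeriv j g) y :=
  ((ContinuousLinearMap.apply ℝ ℝ (Pi.single j (1 : ℝ) : Fin n → ℝ)).analyticAt _).comp hg.fderiv

lemma coordDeriv_congr {g h : (Fin n → ℝ) → ℝ} {y : Fin n → ℝ} (hgh : g =ᶠ[𝓝 y] h) (j : Fin n) :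
    coordDeriv j g =ᶠ[𝓝 y] coordDeriv j h := by
  filter_upwards [hgh.fderiv (𝕜 := ℝ)] with z hz
  simp [coordDeriv, hz]

lemma coordDeriv_add {g h : (Fin n → ℝ) → ℝ} {y : Fin n → ℝ} (hg : AnalyticAt ℝ g y)
    (hh : AnalyticAt ℝ h y) (j : Fin n) :
    coordDeriv j (fun z => g z + h z) =ᶠ[𝓝 y] fun z => coordDeriv j g z + coordDeriv j h z := by
  filter_upwards [hg.eventually_analyticAt, hh.eventually_analyticAt] with z hz hz'
  simp [coordDeriv, fderiv_fun_add hz.differentiableAt hz'.differentiableAt]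

lemma coordDeriv_mul {g h : (Fin n → ℝ) → ℝ} {y : Fin n → ℝ} (hg : AnalyticAt ℝ g y)
    (hh : AnalyticAt ℝ h y) (j : Fin n) :
    coordDeriv j (fun z => g z * h z) =ᶠ[𝓝 y]
      fun z => g z * coordDeriv j h z + h z * coordDeriv j g z := by
  filter_upwards [hg.eventually_analyticAt, hh.eventually_analyticAt] with z hz hz'
  simp [coordDeriv, fderiv_fun_mul hz.differentiableAt hz'.differentiableAt]

variable {U}

lemma germAlong_congr {x : ι → Fin n → ℝ} (hx : Tendsto x U (𝓝 0)) {g h : (Fin n → ℝ) → ℝ}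
    (hgh : g =ᶠ[𝓝 0] h) : germAlong U x g = germAlong U x h :=
  Germ.coe_eq.2 (hx.eventually hgh)

variable (U) in
/-- Only the zero germ of analytic functions vanishes along `x`. -/
def AnalyticallyIndependent (x : ι → Fin n → ℝ) : Prop :=
  ∀ g : (Fin n → ℝ) → ℝ, AnalyticAt ℝ g 0 → germAlong U x g = 0 → g =ᶠ[𝓝 0] 0

lemma AnalyticallyIndependent.eventuallyEq {x : ι → Fin n → ℝ} (hi : AnalyticallyIndependent U x)
    {g h : (Fin n → ℝ) → ℝ} (hg : AnalyticAt ℝ g 0) (hh : AnalyticAt ℝ h 0)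
    (hgh : germAlong U x g = germAlong U x h) : g =ᶠ[𝓝 0] h := by
  have := hi (fun y => g y - h y) (hg.sub hh)
    (show germAlong U x g - germAlong U x h = 0 from sub_eq_zero.2 hgh)
  filter_upwards [this] with y hy
  exact sub_eq_zero.1 hy

lemma AnalyticallyIndependent.exists_derivation {x : ι → Fin n → ℝ} (hx : Tendsto x U (𝓝 0))
    (hi : AnalyticallyIndependent U x) (j : Fin n) :
    ∃ d : Derivation ℤ (analyticValues U x) (analyticValues U x),
      ∀ g (hg : AnalyticAt ℝ g 0),
        (d ⟨germAlong U x g, g, hg, rfl⟩ : Germ (U : Filter ι) ℝ) =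
          germAlong U x (coordDeriv j g) := by
  choose rep hrep hrep' using fun a : analyticValues U x => a.2
  let d : analyticValues U x → analyticValues U x := fun a =>
    ⟨germAlong U x (coordDeriv j (rep a)), _, (hrep a).coordDeriv j, rfl⟩
  have hd : ∀ (a : analyticValues U x) g, AnalyticAt ℝ g 0 → germAlong U x g = a →
      (d a : Germ (U : Filter ι) ℝ) = germAlong U x (coordDeriv j g) := by
    intro a g hg hga
    exact germAlong_congr hx (coordDeriv_congr
      (hi.eventuallyEq (hrep a) hg ((hrep' a).trans hga.symm)) j)
  have hadd : ∀ a b, d (a + b) = d a + d b := by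
    intro a b
    refine Subtype.ext ?_
    rw [hd (a + b) (fun y => rep a y + rep b y) ((hrep a).add (hrep b))
      (show germAlong U x (rep a) + germAlong U x (rep b) = _ by rw [hrep', hrep']; rfl),
      germAlong_congr hx (coordDeriv_add (hrep a) (hrep b) j)]
    rfl
  have hmul : ∀ a b, d (a * b) = a • d b + b • d a := by
    intro a b
    refine Subtype.ext ?_
    rw [hd (a * b) (fun y => rep a y * rep b y) ((hrep a).mul (hrep b))
      (show germAlong U x (rep a) * germAlong U x (rep b) = _ by rw [hrep', hrep']; rfl),
      germAlong_congr hx (coordDeriv_mul (hrep a) (hrep b) j)]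
    change germAlong U x (rep a) * germAlong U x (coordDeriv j (rep b)) +
      germAlong U x (rep b) * germAlong U x (coordDeriv j (rep a)) = _
    rw [hrep', hrep']
    rfl
  exact ⟨Derivation.mk' (AddMonoidHom.mk' d hadd).toIntLinearMap hmul, fun g hg => hd _ g hg rfl⟩

open Polynomial in
lemma IsAlgebraic.exists_aeval_eq_zero_derivation {R K κ : Type*} [CommRing R] [Field K]
    [Algebra R K] {u : K} (hu : IsAlgebraic R u) (d : κ → Derivation ℤ R R)
    (D : κ → Derivation ℤ K K) (hD : ∀ j r, D j (algebraMap R K r) = algebraMap R K (d j r))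
    (hDu : ∀ j, D j u = 0) :
    ∃ p : R[X], p ≠ 0 ∧ aeval u p = 0 ∧
      ∀ j k, p.leadingCoeff * d j (p.coeff k) = p.coeff k * d j p.leadingCoeff := by
  classical
  have hex : ∃ N, ∃ p : R[X], p ≠ 0 ∧ aeval u p = 0 ∧ p.natDegree = N := by
    obtain ⟨p, hp, hpu⟩ := hu
    exact ⟨_, p, hp, hpu, rfl⟩
  obtain ⟨p, hp, hpu, hpN⟩ := Nat.find_spec hex
  refine ⟨p, hp, hpu, fun j => ?_⟩
  set N := Nat.find hex with hN
  have hmin : ∀ q : R[X], aeval u q = 0 → (∀ k, N ≤ k → q.coeff k = 0) → q = 0 := by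
    intro q hq hqN
    by_contra hq0
    have hlt : q.natDegree < N := by
      by_contra! hle
      exact hq0 (leadingCoeff_eq_zero.1 (hqN _ hle))
    exact Nat.find_min hex hlt ⟨q, hq0, hq, rfl⟩
  have hDpow : ∀ k, D j (u ^ k) = 0 := fun k => by simp [Derivation.leibniz_pow, hDu]
  have hpu' : ∑ k ∈ Finset.range (N + 1), algebraMap R K (p.coeff k) * u ^ k = 0 := by
    rw [aeval_eq_sum_range, hpN] at hpu
    simpa [Algebra.smul_def] using hpu
  have hDpu : ∑ k ∈ Finset.range (N + 1), algebraMap R K (d j (p.coeff k)) * u ^ k = 0 := by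
    have := congrArg (D j) hpu'
    simpa [map_sum, Derivation.leibniz, hDpow, hD, mul_comm] using this
  let q : R[X] := ∑ k ∈ Finset.range (N + 1),
    monomial k (p.leadingCoeff * d j (p.coeff k) - p.coeff k * d j p.leadingCoeff)
  have hcoeff : ∀ k, q.coeff k = if k < N + 1 then
      p.leadingCoeff * d j (p.coeff k) - p.coeff k * d j p.leadingCoeff else 0 := by
    intro k
    simp only [q, finsetSum_coeff, coeff_monomial, Finset.sum_ite_eq', Finset.mem_range]
  have hq : q = 0 := by
    refine hmin q ?_ fun k hk => ?_
    · have : aeval u q = algebraMap R K p.leadingCoeff *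
          (∑ k ∈ Finset.range (N + 1), algebraMap R K (d j (p.coeff k)) * u ^ k) -
          algebraMap R K (d j p.leadingCoeff) *
          (∑ k ∈ Finset.range (N + 1), algebraMap R K (p.coeff k) * u ^ k) := by
        rw [Finset.mul_sum, Finset.mul_sum, ← Finset.sum_sub_distrib, map_sum]
        refine Finset.sum_congr rfl fun k _ => ?_
        simp only [aeval_monomial, map_sub, map_mul]
        ring
      rw [this, hDpu, hpu', mul_zero, mul_zero, sub_zero]
    · rw [hcoeff]
      split_ifs with h
      · obtain rfl : k = N := by omega
        rw [← hpN, coeff_natDegree, sub_self]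
      · rfl
  intro k
  by_cases hk : k < N + 1
  · have := hcoeff k
    rw [hq, if_pos hk, coeff_zero] at this
    exact sub_eq_zero.1 this.symm
  · rw [coeff_eq_zero_of_natDegree_lt (by omega)]
    simp

variable (U) in
/-- The derivation `D` satisfies the chain rule for analytic functions evaluated along `x`. -/
def SatisfiesChainRule (D : Derivation ℤ (Germ (U : Filter ι) ℝ) (Germ (U : Filter ι) ℝ))
    (x : ι → Fin n → ℝ) : Prop :=
  ∀ g : (Fin n → ℝ) → ℝ, AnalyticAt ℝ g 0 → D (germAlong U x g) =
    ∑ j, germAlong U x (coordDeriv j g) * D (germAlong U x fun y => y j)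

variable (U) in
/-- An element of the ultrapower that is algebraic over the real numbers. -/
def IsAlgebraicOverReal (u : Germ (U : Filter ι) ℝ) : Prop :=
  ∃ P : Polynomial ℝ, P ≠ 0 ∧
    P.eval₂ ((Germ.coeRingHom (U : Filter ι)).comp (Pi.constRingHom ι ℝ)) u = 0

lemma fderiv_eq_of_coordDeriv_eq {g h : (Fin n → ℝ) → ℝ} {y : Fin n → ℝ} {a b : ℝ}
    (hgh : ∀ j, a * coordDeriv j g y = b * coordDeriv j h y) :
    a • fderiv ℝ g y = b • fderiv ℝ h y := by
  refine ContinuousLinearMap.coe_injective ((Pi.basisFun ℝ (Fin n)).ext fun j => ?_)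
  simpa [coordDeriv] using hgh j

lemma germAlong_coordDeriv_coord (x : ι → Fin n → ℝ) (i j : Fin n) :
    germAlong U x (coordDeriv i fun y => y j) = if i = j then 1 else 0 := by
  have : (coordDeriv i fun y : Fin n → ℝ => y j) = fun _ => if i = j then (1 : ℝ) else 0 := by
    funext y
    have h := (ContinuousLinearMap.proj (R := ℝ) (φ := fun _ : Fin n => ℝ) j).hasFDerivAt (x := y)
    change fderiv ℝ (ContinuousLinearMap.proj (R := ℝ) (φ := fun _ : Fin n => ℝ) j) y _ = _
    rw [h.fderiv]
    simp [Pi.single_apply, eq_comm]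
  rw [this]
  split_ifs <;> rfl

open Polynomial in
lemma AnalyticallyIndependent.isAlgebraicOverReal {x : ι → Fin n → ℝ} (hx : Tendsto x U (𝓝 0))
    (hi : AnalyticallyIndependent U x) {u : Germ (U : Filter ι) ℝ}
    (hu : IsAlgebraic (analyticValues U x) u)
    (hD : ∀ D, SatisfiesChainRule U D x → D u = 0) : IsAlgebraicOverReal U u := by
  choose d hd using hi.exists_derivation hx
  choose D hDd using fun j => Derivation.exists_extension_of_charZero
    (R := analyticValues U x) (K := Germ (U : Filter ι) ℝ) Subtype.val_injective
    ((Algebra.linearMap (analyticValues U x) (Germ (U : Filter ι) ℝ)).compDer (d j))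
  have hDg : ∀ j g, AnalyticAt ℝ g 0 →
      D j (germAlong U x g) = germAlong U x (coordDeriv j g) := by
    intro j g hg
    exact (hDd j ⟨germAlong U x g, g, hg, rfl⟩).trans (hd j g hg)
  have hcoord : ∀ j : Fin n, AnalyticAt ℝ (fun y : Fin n → ℝ => y j) 0 := fun j =>
    (ContinuousLinearMap.proj (R := ℝ) (φ := fun _ : Fin n => ℝ) j).analyticAt _
  have hchain : ∀ j, SatisfiesChainRule U (D j) x := by
    intro j g hg
    simp [hDg j _ (hcoord _), hDg j g hg, germAlong_coordDeriv_coord]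
  obtain ⟨p, hp, hpu, hcoef⟩ := hu.exists_aeval_eq_zero_derivation d D hDd
    fun j => hD _ (hchain j)
  choose rep hrep hrep' using fun a : analyticValues U x => a.2
  set a := p.leadingCoeff with ha
  have ha0 : a ≠ 0 := leadingCoeff_ne_zero.2 hp
  have hA0 : ¬ ∀ᶠ y in 𝓝 0, rep a y = 0 := by
    intro h
    apply ha0
    refine Subtype.ext ?_
    rw [← hrep' a, germAlong_congr hx (h := fun _ => 0) h]
    rfl
  have hdrep : ∀ j b, (d j b : Germ (U : Filter ι) ℝ) = germAlong U x (coordDeriv j (rep b)) := by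
    intro j b
    rw [← hd j _ (hrep b)]
    exact congrArg (fun c => (d j c : Germ (U : Filter ι) ℝ)) (Subtype.ext (hrep' b).symm)
  have hc : ∀ k, ∃ c : ℝ, ∀ᶠ y in 𝓝 0, rep (p.coeff k) y = c * rep a y := by
    intro k
    refine (hrep _).eventuallyEq_const_mul_of_fderiv (hrep _) hA0 ?_
    have : ∀ j, (fun y => rep a y * coordDeriv j (rep (p.coeff k)) y) =ᶠ[𝓝 0]
        fun y => rep (p.coeff k) y * coordDeriv j (rep a) y := by
      intro j
      refine hi.eventuallyEq ((hrep _).mul ((hrep _).coordDeriv j))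
        ((hrep _).mul ((hrep _).coordDeriv j)) ?_
      have h := congrArg (Subtype.val (p := (· ∈ analyticValues U x))) (hcoef j k)
      change (a : Germ (U : Filter ι) ℝ) * (d j (p.coeff k) : Germ (U : Filter ι) ℝ) =
        (p.coeff k : Germ (U : Filter ι) ℝ) * (d j a : Germ (U : Filter ι) ℝ) at h
      rw [hdrep, hdrep] at h
      change germAlong U x (rep a) * germAlong U x (coordDeriv j (rep (p.coeff k))) =
        germAlong U x (rep (p.coeff k)) * germAlong U x (coordDeriv j (rep a))
      rw [hrep', hrep', h]
    filter_upwards [eventually_all.2 this] with y hy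
    exact fderiv_eq_of_coordDeriv_eq hy
  choose c hc using hc
  let φ : ℝ →+* Germ (U : Filter ι) ℝ :=
    (Germ.coeRingHom (U : Filter ι)).comp (Pi.constRingHom ι ℝ)
  have hcoeff : ∀ k, (p.coeff k : Germ (U : Filter ι) ℝ) = φ (c k) * a := by
    intro k
    rw [← hrep' (p.coeff k), ← hrep' a, germAlong_congr hx (hc k)]
    rfl
  have hN : c p.natDegree ≠ 0 := by
    intro h
    have := hcoeff p.natDegree
    rw [h, map_zero, zero_mul] at this
    exact ha0 (Subtype.ext this)
  refine ⟨∑ k ∈ Finset.range (p.natDegree + 1), monomial k (c k), ?_, ?_⟩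
  · intro h
    apply hN
    have := congrArg (fun q => coeff q p.natDegree) h
    simpa [finsetSum_coeff, coeff_monomial] using this
  · have ha0' : (a : Germ (U : Filter ι) ℝ) ≠ 0 := fun h => ha0 (Subtype.ext h)
    refine (mul_eq_zero.1 ?_).resolve_left ha0'
    rw [aeval_eq_sum_range] at hpu
    rw [eval₂_finsetSum, Finset.mul_sum, ← hpu]
    refine Finset.sum_congr rfl fun k _ => ?_
    rw [eval₂_monomial, Algebra.smul_def]
    change _ = (p.coeff k : Germ (U : Filter ι) ℝ) * u ^ k
    rw [hcoeff]
    change (a : Germ (U : Filter ι) ℝ) * (φ (c k) * u ^ k) = _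
    ring

/-- Dropping the first coordinate, as a continuous linear map. -/
def tailCLM (n : ℕ) : (Fin (n + 1) → ℝ) →L[ℝ] (Fin n → ℝ) :=
  ContinuousLinearMap.pi fun j => ContinuousLinearMap.proj j.succ

lemma tailCLM_apply (y : Fin (n + 1) → ℝ) : tailCLM n y = Fin.tail y := rfl

section FunctionalCalculus

variable {N : ℕ}

/-- The power series `p`, with its variables replaced by elements of an algebra. -/
noncomputable def FormalMultilinearSeries.algebraSeries
    (p : FormalMultilinearSeries ℝ (Fin N → ℝ) ℝ) (A : Type*) [NormedRing A] [NormedAlgebra ℝ A] :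
    FormalMultilinearSeries ℝ (Fin N → A) A := fun k =>
  ∑ i : Fin k → Fin N, p k (fun j => Pi.single (i j) 1) •
    (ContinuousMultilinearMap.mkPiAlgebraFin ℝ k A).compContinuousLinearMap
      fun j => ContinuousLinearMap.proj (R := ℝ) (φ := fun _ : Fin N => A) (i j)

lemma FormalMultilinearSeries.norm_algebraSeries_le
    (p : FormalMultilinearSeries ℝ (Fin N → ℝ) ℝ) (A : Type*) [NormedRing A] [NormedAlgebra ℝ A]
    (k : ℕ) : ‖p.algebraSeries A k‖ ≤ max 1 ‖(1 : A)‖ * (N : ℝ) ^ k * ‖p k‖ := by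
  refine ContinuousMultilinearMap.opNorm_le_bound (by positivity) fun v => ?_
  have hterm : ∀ i : Fin k → Fin N, ‖(p k fun j => Pi.single (i j) 1) •
      (List.ofFn fun j => v j (i j)).prod‖ ≤ max 1 ‖(1 : A)‖ * ‖p k‖ * ∏ j, ‖v j‖ := by
    intro i
    have hprod : ‖(List.ofFn fun j => v j (i j)).prod‖ ≤ max 1 ‖(1 : A)‖ * ∏ j, ‖v j‖ := by
      refine ((ContinuousMultilinearMap.mkPiAlgebraFin ℝ k A).le_opNorm fun j => v j (i j)).trans
        (mul_le_mul ContinuousMultilinearMap.norm_mkPiAlgebraFin_le ?_ (by positivity)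
          (by positivity))
      exact Finset.prod_le_prod (fun _ _ => norm_nonneg _) fun j _ => norm_le_pi_norm (v j) (i j)
    have hval : ‖p k fun j => Pi.single (i j) 1‖ ≤ ‖p k‖ := by
      refine ((p k).le_opNorm _).trans (mul_le_of_le_one_right (norm_nonneg _) ?_)
      exact Finset.prod_le_one (fun _ _ => norm_nonneg _) fun j _ => by simp [Pi.norm_single]
    rw [norm_smul]
    exact (mul_le_mul hval hprod (norm_nonneg _) (norm_nonneg _)).trans_eq (by ring)
  rw [algebraSeries, sum_apply]
  refine (norm_sum_le _ _).trans ((Finset.sum_le_sum fun i _ => hterm i).trans_eq ?_)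
  simp
  ring

lemma FormalMultilinearSeries.radius_algebraSeries_pos
    {p : FormalMultilinearSeries ℝ (Fin N → ℝ) ℝ} (hp : 0 < p.radius)
    (A : Type*) [NormedRing A] [NormedAlgebra ℝ A] : 0 < (p.algebraSeries A).radius := by
  obtain ⟨r, hr0, hr⟩ := ENNReal.lt_iff_exists_nnreal_btwn.1 hp
  obtain ⟨C, hC, hpC⟩ := p.norm_mul_pow_le_of_lt_radius hr
  have hr0 : 0 < r := by simpa using hr0
  refine lt_of_lt_of_le ?_ ((p.algebraSeries A).le_radius_of_bound (max 1 ‖(1 : A)‖ * C)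
    (r := r / (N + 1)) fun k => ?_)
  · exact ENNReal.coe_pos.2 (by positivity)
  · calc ‖p.algebraSeries A k‖ * ((r / (N + 1) : NNReal) : ℝ) ^ k
        ≤ max 1 ‖(1 : A)‖ * (N : ℝ) ^ k * ‖p k‖ * (r / (N + 1) : ℝ) ^ k := by
          push_cast
          gcongr
          exact p.norm_algebraSeries_le A k
      _ = max 1 ‖(1 : A)‖ * (‖p k‖ * r ^ k) * (N / (N + 1) : ℝ) ^ k := by
          simp only [div_pow]
          ring
      _ ≤ max 1 ‖(1 : A)‖ * (‖p k‖ * r ^ k) := by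
          refine mul_le_of_le_one_right (by positivity) (pow_le_one₀ (by positivity) ?_)
          exact (div_le_one (by positivity)).2 (by linarith)
      _ ≤ max 1 ‖(1 : A)‖ * C := by
          gcongr
          exact hpC k

variable {X : Type*} [NormedAddCommGroup X] [NormedSpace ℝ X]

lemma apply_prod_ofFn_of_apply_eq_mul {φ : X →L[ℝ] ℝ} {k : ℕ} {b : Fin k → X →L[ℝ] X}
    {s : Fin k → ℝ} (h : ∀ i v, φ (b i v) = s i * φ v) (v : X) :
    φ ((List.ofFn b).prod v) = (∏ i, s i) * φ v := by
  induction k with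
  | zero => simp
  | succ k ih =>
    rw [List.ofFn_succ, List.prod_cons, mul_apply_eq_comp, h,
      ih (s := fun i => s i.succ) (fun i => h i.succ), Fin.prod_univ_succ, mul_assoc]

lemma FormalMultilinearSeries.apply_algebraSeries
    (p : FormalMultilinearSeries ℝ (Fin N → ℝ) ℝ) {φ : X →L[ℝ] ℝ} {b : Fin N → X →L[ℝ] X}
    {s : Fin N → ℝ} (h : ∀ i v, φ (b i v) = s i * φ v) (k : ℕ) (v : X) :
    φ (p.algebraSeries (X →L[ℝ] X) k (fun _ => b) v) = p k (fun _ => s) * φ v := by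
  have hs : (fun _ : Fin k => s) = fun _ : Fin k => ∑ j, s j • Pi.single j (1 : ℝ) := by
    funext _
    exact pi_eq_sum_univ' s
  rw [hs, ContinuousMultilinearMap.map_sum, Finset.sum_mul, algebraSeries,
    sum_apply, sum_apply, map_sum]
  refine Finset.sum_congr rfl fun i _ => ?_
  rw [ContinuousMultilinearMap.map_smul_univ, _root_.smul_apply, _root_.smul_apply,
    map_smul,
    ContinuousMultilinearMap.compContinuousLinearMap_apply,
    ContinuousMultilinearMap.mkPiAlgebraFin_apply]
  have := apply_prod_ofFn_of_apply_eq_mul (b := fun j => b (i j)) (s := fun j => s (i j))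
    (fun j => h (i j)) v
  simp only [ContinuousLinearMap.proj_apply, this, smul_eq_mul]
  ring

/-- An analytic function germ can be evaluated at small bounded operators, compatibly with common
eigenfunctionals. -/
lemma AnalyticAt.exists_operator_extension [CompleteSpace X] {f : (Fin N → ℝ) → ℝ}
    (hf : AnalyticAt ℝ f 0) :
    ∃ F : (Fin N → X →L[ℝ] X) → X →L[ℝ] X, ∃ r > 0, AnalyticOnNhd ℝ F (Metric.ball 0 r) ∧
      ∀ b ∈ Metric.ball 0 r, ∀ s ∈ Metric.ball 0 r, ∀ φ : X →L[ℝ] ℝ,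
        (∀ i v, φ (b i v) = s i * φ v) → ∀ v, φ (F b v) = f s * φ v := by
  obtain ⟨p, R, hR⟩ := hf
  let P := p.algebraSeries (X →L[ℝ] X)
  have hP : HasFPowerSeriesOnBall P.sum P 0 P.radius :=
    P.hasFPowerSeriesOnBall
      (FormalMultilinearSeries.radius_algebraSeries_pos (hR.r_pos.trans_le hR.r_le) _)
  obtain ⟨r, hr0, hr⟩ := ENNReal.lt_iff_exists_nnreal_btwn.1 (lt_min hR.r_pos hP.r_pos)
  rw [lt_min_iff] at hr
  have hsub : Metric.ball (0 : Fin N → ℝ) r ⊆ Metric.eball 0 R :=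
    Metric.eball_coe.symm.subset.trans (Metric.eball_subset_eball hr.1.le)
  have hsub' : Metric.ball (0 : Fin N → X →L[ℝ] X) r ⊆ Metric.eball 0 P.radius :=
    Metric.eball_coe.symm.subset.trans
      (Metric.eball_subset_eball hr.2.le)
  refine ⟨P.sum, r, by simpa using hr0, fun b hb => hP.analyticAt_of_mem (hsub' hb),
    fun b hb s hs φ h v => ?_⟩
  have h1 := (hP.hasSum (hsub' hb)).mapL
    (φ.comp (ContinuousLinearMap.apply ℝ X v))
  have h2 := (hR.hasSum (hsub hs)).mul_right (φ v)
  simp only [zero_add] at h1 h2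
  refine h1.unique (h2.congr_fun fun k => ?_)
  exact p.apply_algebraSeries h k v

end FunctionalCalculus

section Shift

/-- Shift operators on a Banach space of sequences, in coordinate-free form. -/
structure ShiftData (X : Type*) [NormedAddCommGroup X] [NormedSpace ℝ X] where
  right : X →L[ℝ] X
  left : X →L[ℝ] X
  head : X →L[ℝ] ℝ
  unit : X
  left_right : ∀ v, left (right v) = v
  head_right : ∀ v, head (right v) = 0
  head_unit : head unit = 1
  left_unit : left unit = 0
  decomp : ∀ v, v = head v • unit + right (left v)

/-- The shifts of bounded sequences. -/
noncomputable def boundedShiftData : ShiftData (BoundedContinuousFunction ℕ ℝ) where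
  right := LinearMap.mkContinuous
    { toFun := fun v => BoundedContinuousFunction.ofNormedAddCommGroupDiscrete
        (fun k => Nat.casesOn k 0 fun k => v k) ‖v‖ (by
          rintro (_ | k)
          · simp
          · exact v.norm_coe_le_norm k)
      map_add' := fun v w => by ext (_ | k) <;> simp
      map_smul' := fun c v => by ext (_ | k) <;> simp } 1 fun v => by
        rw [one_mul]
        refine (BoundedContinuousFunction.norm_le (norm_nonneg v)).2 ?_
        rintro (_ | k)
        · simp
        · exact v.norm_coe_le_norm k
  left := LinearMap.mkContinuous
    { toFun := fun v => BoundedContinuousFunction.ofNormedAddCommGroupDiscrete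
        (fun k => v (k + 1)) ‖v‖ fun k => v.norm_coe_le_norm _
      map_add' := fun v w => by ext k; simp
      map_smul' := fun c v => by ext k; simp } 1 fun v => by
        rw [one_mul]
        exact (BoundedContinuousFunction.norm_le (norm_nonneg v)).2 fun k => v.norm_coe_le_norm _
  head := BoundedContinuousFunction.evalCLM ℝ 0
  unit := BoundedContinuousFunction.ofNormedAddCommGroupDiscrete
    (fun k => Nat.casesOn k 1 fun _ => 0) 1 (by rintro (_ | k) <;> simp)
  left_right v := by ext k; rfl
  head_right v := rfl
  head_unit := rfl
  left_unit := by ext k; rfl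
  decomp v := by
    ext (_ | k)
    · simp
    · simp

namespace ShiftData

variable {X : Type*} [NormedAddCommGroup X] [NormedSpace ℝ X] (σ : ShiftData X)

lemma left_pow_right_pow (m : ℕ) : σ.left ^ m * σ.right ^ m = 1 := by
  induction m with
  | zero => simp
  | succ m ih =>
    have h : σ.left * σ.right = 1 := ContinuousLinearMap.ext σ.left_right
    rw [pow_succ, pow_succ', mul_assoc, ← mul_assoc σ.left, h, one_mul, ih]

lemma eq_sum_add (m : ℕ) (v : X) :
    v = ∑ i : Fin m, σ.head ((σ.left ^ (i : ℕ)) v) • (σ.right ^ (i : ℕ)) σ.unit +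
      (σ.right ^ m) ((σ.left ^ m) v) := by
  induction m with
  | zero => simp
  | succ m ih =>
    conv_lhs => rw [ih, σ.decomp ((σ.left ^ m) v)]
    rw [Fin.sum_univ_castSucc, map_add, map_smul, pow_succ σ.right, pow_succ' σ.left, add_assoc]
    rfl

/-- Evaluation of a power series with coefficients in `X` at the point `t`. -/
noncomputable def eval (t : ℝ) : X →L[ℝ] ℝ := σ.head.comp (Ring.inverse (1 - t • σ.left))

variable {σ} {t : ℝ}

lemma inverse_apply (ht : IsUnit (1 - t • σ.left)) {v w : X} (h : v - t • σ.left v = w) :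
    Ring.inverse (1 - t • σ.left) w = v := by
  have := congrArg (fun B : X →L[ℝ] X => B v) (Ring.inverse_mul_cancel _ ht)
  simpa [h] using this

lemma eval_unit (ht : IsUnit (1 - t • σ.left)) : σ.eval t σ.unit = 1 := by
  rw [eval, ContinuousLinearMap.comp_apply,
    inverse_apply ht (v := σ.unit) (by simp [σ.left_unit]), σ.head_unit]

lemma eval_right (ht : IsUnit (1 - t • σ.left)) (v : X) :
    σ.eval t (σ.right v) = t * σ.eval t v := by
  obtain ⟨w, hw⟩ : ∃ w, w - t • σ.left w = v :=
    ⟨Ring.inverse (1 - t • σ.left) v, by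
      simpa using congrArg (fun B : X →L[ℝ] X => B v) (Ring.mul_inverse_cancel _ ht)⟩
  have h : Ring.inverse (1 - t • σ.left) (σ.right v) = σ.right w + (t * σ.head w) • σ.unit := by
    refine inverse_apply ht ?_
    rw [← hw]
    simp only [map_add, map_sub, map_smul, σ.left_right, σ.left_unit, smul_zero, add_zero, mul_smul]
    have hd : t • w = t • σ.head w • σ.unit + t • σ.right (σ.left w) := by
      rw [← smul_add, ← σ.decomp]
    rw [hd]
    abel
  rw [eval, ContinuousLinearMap.comp_apply, h, ContinuousLinearMap.comp_apply, inverse_apply ht hw]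
  simp [σ.head_right, σ.head_unit]

lemma eval_right_pow (ht : IsUnit (1 - t • σ.left)) (m : ℕ) (v : X) :
    σ.eval t ((σ.right ^ m) v) = t ^ m * σ.eval t v := by
  induction m with
  | zero => simp
  | succ m ih =>
    rw [pow_succ', mul_apply_eq_comp, eval_right ht, ih, pow_succ', mul_assoc]

variable (σ) [CompleteSpace X]

lemma eventually_isUnit : ∀ᶠ t : ℝ in 𝓝 0, IsUnit (1 - t • σ.left) := by
  have h : Tendsto (fun t : ℝ => 1 - t • σ.left) (𝓝 0) (𝓝 1) :=
    Continuous.tendsto' (by fun_prop) _ _ (by simp)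
  exact h.eventually (Units.isOpen.mem_nhds isUnit_one)

lemma analyticAt_eval : AnalyticAt ℝ σ.eval 0 := by
  have h : AnalyticAt ℝ (Ring.inverse : (X →L[ℝ] X) → _) (1 - (0 : ℝ) • σ.left) := by
    simpa using analyticAt_inverse (𝕜 := ℝ) (1 : (X →L[ℝ] X)ˣ)
  have h' : AnalyticAt ℝ (fun t : ℝ => Ring.inverse (1 - t • σ.left)) 0 :=
    AnalyticAt.fun_comp h (analyticAt_const.sub (analyticAt_id.smul analyticAt_const))
  exact ((ContinuousLinearMap.compL ℝ X X ℝ σ.head).analyticAt _).fun_comp h'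

end ShiftData

end Shift

section Division

variable {X : Type*} [NormedAddCommGroup X] [NormedSpace ℝ X]

lemma AnalyticAt.continuousLinearMap_apply {E Y Z : Type*} [NormedAddCommGroup E] [NormedSpace ℝ E]
    [NormedAddCommGroup Y] [NormedSpace ℝ Y] [NormedAddCommGroup Z] [NormedSpace ℝ Z]
    {A : E → Y →L[ℝ] Z} {v : E → Y} {a : E} (hA : AnalyticAt ℝ A a) (hv : AnalyticAt ℝ v a) :
    AnalyticAt ℝ (fun x => A x (v x)) a :=
  ((ContinuousLinearMap.id ℝ (Y →L[ℝ] Z)).analyticAt_bilinear (A a, v a)).comp₂ hA hv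

lemma AnalyticAt.ringInverse {E B : Type*} [NormedAddCommGroup E] [NormedSpace ℝ E]
    [NormedRing B] [NormedAlgebra ℝ B] [CompleteSpace B] {A : E → B} {a : E}
    (hA : AnalyticAt ℝ A a) (hu : IsUnit (A a)) : AnalyticAt ℝ (fun x => Ring.inverse (A x)) a := by
  obtain ⟨z, hz⟩ := hu
  exact AnalyticAt.fun_comp (hz ▸ analyticAt_inverse z) hA

lemma ContinuousAt.eventually_isUnit {E B : Type*} [TopologicalSpace E] [NormedRing B]
    [CompleteSpace B] {A : E → B} {a : E} (hA : ContinuousAt A a) (hu : IsUnit (A a)) :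
    ∀ᶠ x in 𝓝 a, IsUnit (A x) :=
  hA.eventually (Units.isOpen.mem_nhds hu)

/-- The operators substituted for the coordinates in Weierstrass division. -/
noncomputable def ShiftData.coords (σ : ShiftData X) (ρ : ℝ) (x : Fin n → ℝ) :
    Fin (n + 1) → X →L[ℝ] X :=
  Fin.cons (ρ • σ.right) fun i => x i • 1

lemma ShiftData.analyticAt_coords (σ : ShiftData X) (ρ : ℝ) (x : Fin n → ℝ) :
    AnalyticAt ℝ (σ.coords ρ) x := by
  refine AnalyticAt.pi fun i => ?_
  refine Fin.cases analyticAt_const (fun i => ?_) i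
  exact ((ContinuousLinearMap.proj (R := ℝ) (φ := fun _ : Fin n => ℝ) i).analyticAt x).smul
    analyticAt_const

lemma ShiftData.eval_coords {σ : ShiftData X} {t : ℝ} (ht : IsUnit (1 - t • σ.left)) (ρ : ℝ)
    (x : Fin n → ℝ) (i : Fin (n + 1)) (v : X) :
    σ.eval t (σ.coords ρ x i v) = (Fin.cons (ρ * t) x : Fin (n + 1) → ℝ) i * σ.eval t v := by
  refine Fin.cases ?_ (fun i => ?_) i
  · simp [coords, eval_right ht, mul_assoc]
  · simp [coords]

lemma AnalyticAt.exists_operator_extension_unit [CompleteSpace X] {w : ℝ → ℝ}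
    (hw : AnalyticAt ℝ w 0) (hw0 : w 0 ≠ 0) (B : X →L[ℝ] X) :
    ∃ W : ℝ → X →L[ℝ] X, (∀ᶠ ρ in 𝓝 0, IsUnit (W ρ)) ∧ ∀ᶠ ρ in 𝓝 0, ∀ᶠ s in 𝓝 0,
      ∀ φ : X →L[ℝ] ℝ, (∀ v, φ (ρ • B v) = s * φ v) → ∀ v, φ (W ρ v) = w s * φ v := by
  have hw' : AnalyticAt ℝ (fun z : Fin 1 → ℝ => w (z 0)) 0 :=
    AnalyticAt.fun_comp hw
      ((ContinuousLinearMap.proj (R := ℝ) (φ := fun _ : Fin 1 => ℝ) 0).analyticAt 0)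
  obtain ⟨F, r, hr, hF, hFφ⟩ := hw'.exists_operator_extension (X := X)
  have hlim : Tendsto (fun ρ : ℝ => (fun _ : Fin 1 => ρ • B)) (𝓝 0) (𝓝 0) :=
    Continuous.tendsto' (by fun_prop) _ _ (by ext; simp)
  have hlim' : Tendsto (fun s : ℝ => (fun _ : Fin 1 => s)) (𝓝 0) (𝓝 0) :=
    Continuous.tendsto' (by fun_prop) _ _ (by ext; simp)
  have hF0 : F 0 = w 0 • 1 := by
    ext v
    refine (SeparatingDual.eq_iff_forall_dual_eq (R := ℝ)).2 fun φ => ?_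
    simpa using hFφ 0 (Metric.mem_ball_self hr) 0 (Metric.mem_ball_self hr) φ (by simp) v
  have hunit : IsUnit (F 0) := by
    rw [hF0]
    rw [← Algebra.algebraMap_eq_smul_one]
    exact (IsUnit.mk0 _ hw0).map (algebraMap ℝ (X →L[ℝ] X))
  refine ⟨fun ρ => F fun _ => ρ • B, ?_, ?_⟩
  · exact ((hF 0 (Metric.mem_ball_self hr)).continuousAt.tendsto.comp hlim).eventually
      (Units.isOpen.mem_nhds hunit)
  · filter_upwards [hlim (Metric.ball_mem_nhds 0 hr)] with ρ hρ
    filter_upwards [hlim' (Metric.ball_mem_nhds 0 hr)] with s hs φ hφ v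
    exact hFφ _ hρ _ hs φ (fun _ => hφ) v

/-- Weierstrass division for real analytic germs. The quotient is found by inverting an operator on
a Banach space of power series in the distinguished variable. -/
theorem weierstrass_division {g : (Fin (n + 1) → ℝ) → ℝ} (hg : AnalyticAt ℝ g 0)
    (hreg : ¬ ∀ᶠ t in 𝓝 (0 : ℝ), g (Pi.single 0 t) = 0) :
    ∃ m : ℕ, ∀ h : (Fin (n + 1) → ℝ) → ℝ, AnalyticAt ℝ h 0 →
      ∃ (q : (Fin (n + 1) → ℝ) → ℝ) (r : Fin m → (Fin n → ℝ) → ℝ), AnalyticAt ℝ q 0 ∧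
        (∀ i, AnalyticAt ℝ (r i) 0) ∧
        ∀ᶠ y in 𝓝 0, h y = q y * g y + ∑ i, r i (Fin.tail y) * y 0 ^ (i : ℕ) := by
  have hg1 : AnalyticAt ℝ (fun t : ℝ => g (Pi.single 0 t)) 0 :=
    AnalyticAt.fun_comp (by simpa using hg)
      ((ContinuousLinearMap.single ℝ (fun _ : Fin (n + 1) => ℝ) 0).analyticAt 0)
  obtain ⟨m, w, hw, hw0, hgw⟩ := hg1.exists_eventuallyEq_pow_smul_nonzero_iff.2 hreg
  refine ⟨m, fun h hh => ?_⟩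
  let X := BoundedContinuousFunction ℕ ℝ
  let σ : ShiftData X := boundedShiftData
  obtain ⟨W, hWunit, hWφ⟩ := hw.exists_operator_extension_unit hw0 σ.right
  obtain ⟨G, rG, hrG, hG, hGφ⟩ := hg.exists_operator_extension (X := X)
  obtain ⟨H, rH, hrH, hH, hHφ⟩ := hh.exists_operator_extension (X := X)
  have hlim : Tendsto (fun ρ : ℝ => σ.coords ρ (0 : Fin n → ℝ)) (𝓝 0) (𝓝 0) := by
    refine tendsto_pi_nhds.2 fun i => Fin.cases ?_ (fun i => ?_) i
    · exact Continuous.tendsto' (continuous_id.smul continuous_const) _ _ (by simp)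
    · simp [ShiftData.coords]
  obtain ⟨ρ, ⟨⟨⟨hρunit, hρW⟩, hρG⟩, hρH⟩, hρ⟩ := ((((hWunit.and hWφ).and
    (hlim (Metric.ball_mem_nhds 0 hrG))).and (hlim (Metric.ball_mem_nhds 0 hrH))).filter_mono
      nhdsWithin_le_nhds |>.and (self_mem_nhdsWithin (s := {0}ᶜ))).exists
  let Gt : (Fin n → ℝ) → X →L[ℝ] X := fun x =>
    G (σ.coords ρ x) - G (σ.coords ρ 0) + (ρ • σ.right) ^ m * W ρ
  let M : (Fin n → ℝ) → X →L[ℝ] X := fun x => σ.left ^ m * Gt x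
  let hx : (Fin n → ℝ) → X := fun x => H (σ.coords ρ x) σ.unit
  let qx : (Fin n → ℝ) → X := fun x => Ring.inverse (M x) ((σ.left ^ m) (hx x))
  let rx : (Fin n → ℝ) → X := fun x => hx x - Gt x (qx x)
  have hcoords := σ.analyticAt_coords ρ (0 : Fin n → ℝ)
  have hGt : AnalyticAt ℝ Gt 0 :=
    ((AnalyticAt.fun_comp (hG _ hρG) hcoords).sub analyticAt_const).add analyticAt_const
  have hM : AnalyticAt ℝ M 0 :=
    (analyticAt_const (v := σ.left ^ m)).fun_mul hGt
  have hM0 : IsUnit (M 0) := by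
    have : M 0 = ρ ^ m • W ρ := by
      simp only [M, Gt, sub_self, zero_add, smul_pow]
      rw [smul_mul_assoc, mul_smul_comm, ← mul_assoc, σ.left_pow_right_pow, one_mul]
    rw [this, ← smul_one_mul, ← Algebra.algebraMap_eq_smul_one]
    exact ((IsUnit.mk0 _ (pow_ne_zero m hρ)).map (algebraMap ℝ (X →L[ℝ] X))).mul hρunit
  have hinv : AnalyticAt ℝ (fun x => Ring.inverse (M x)) 0 :=
    AnalyticAt.ringInverse (B := X →L[ℝ] X) hM hM0
  have hhx : AnalyticAt ℝ hx 0 :=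
    (AnalyticAt.fun_comp (hH _ hρH) hcoords).continuousLinearMap_apply analyticAt_const
  have hqx : AnalyticAt ℝ qx 0 := hinv.continuousLinearMap_apply (((σ.left ^ m).analyticAt _).fun_comp hhx)
  have hrx : AnalyticAt ℝ rx 0 := hhx.sub (hGt.continuousLinearMap_apply hqx)
  have htail : AnalyticAt ℝ (fun y : Fin (n + 1) → ℝ => Fin.tail y) 0 :=
    (tailCLM n).analyticAt 0
  have hscale : AnalyticAt ℝ (fun y : Fin (n + 1) → ℝ => y 0 / ρ) 0 :=
    AnalyticAt.div_const
      ((ContinuousLinearMap.proj (R := ℝ) (φ := fun _ : Fin (n + 1) => ℝ) 0).analyticAt 0)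
  refine ⟨fun y => σ.eval (y 0 / ρ) (qx (Fin.tail y)),
    fun i x => σ.head ((σ.left ^ (i : ℕ)) (rx x)) / ρ ^ (i : ℕ), ?_, fun i => ?_, ?_⟩
  · exact AnalyticAt.continuousLinearMap_apply (AnalyticAt.fun_comp (by simpa using σ.analyticAt_eval) hscale)
      (AnalyticAt.fun_comp hqx htail)
  · exact AnalyticAt.div_const (((σ.head.comp (σ.left ^ (i : ℕ))).analyticAt _).fun_comp hrx)
  have htail0 : Tendsto (fun y : Fin (n + 1) → ℝ => Fin.tail y) (𝓝 0) (𝓝 0) :=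
    htail.continuousAt
  have hscale0 : Tendsto (fun y : Fin (n + 1) → ℝ => y 0 / ρ) (𝓝 0) (𝓝 0) := by
    simpa using hscale.continuousAt.tendsto
  have hzero : Tendsto (fun y : Fin (n + 1) → ℝ => y 0) (𝓝 0) (𝓝 0) :=
    (continuous_apply 0).tendsto' _ _ rfl
  have hsingle : Tendsto (fun y : Fin (n + 1) → ℝ => (Pi.single 0 (y 0) : Fin (n + 1) → ℝ))
      (𝓝 0) (𝓝 0) :=
    Continuous.tendsto' ((continuous_single 0).comp (continuous_apply 0)) _ _ (by simp)
  have hcoords0 := hcoords.continuousAt.tendsto.comp htail0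
  filter_upwards [hscale0.eventually σ.eventually_isUnit,
    hcoords0.eventually (Metric.isOpen_ball.mem_nhds hρG),
    hcoords0.eventually (Metric.isOpen_ball.mem_nhds hρH), Metric.ball_mem_nhds 0 hrG,
    Metric.ball_mem_nhds 0 hrH, hsingle.eventually (Metric.ball_mem_nhds 0 hrG),
    hzero.eventually hgw, hzero.eventually hρW,
    htail0.eventually (ContinuousAt.eventually_isUnit (B := X →L[ℝ] X) hM.continuousAt hM0)]
    with y ht hyG hyH hyG' hyH' hsG hgy hWy hMy
  have hcancel : ρ * (y 0 / ρ) = y 0 := mul_div_cancel₀ _ hρ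
  have hy : (Fin.cons (ρ * (y 0 / ρ)) (Fin.tail y) : Fin (n + 1) → ℝ) = y := by
    rw [hcancel, Fin.cons_self_tail]
  have hy0 : (Fin.cons (ρ * (y 0 / ρ)) 0 : Fin (n + 1) → ℝ) = Pi.single 0 (y 0) := by
    rw [hcancel]
    ext i
    refine Fin.cases ?_ (fun i => ?_) i <;> simp
  have hevG : ∀ v, σ.eval (y 0 / ρ) (Gt (Fin.tail y) v) = g y * σ.eval (y 0 / ρ) v := by
    intro v
    have h1 := hGφ (σ.coords ρ (Fin.tail y)) hyG y hyG' (σ.eval (y 0 / ρ))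
      (fun i v => by simpa only [hy] using ShiftData.eval_coords ht ρ (Fin.tail y) i v) v
    have h2 := hGφ (σ.coords ρ 0) hρG _ hsG (σ.eval (y 0 / ρ))
      (fun i v => by simpa only [hy0] using ShiftData.eval_coords ht ρ 0 i v) v
    have h3 := hWy (σ.eval (y 0 / ρ))
      (fun v => by rw [map_smul, ShiftData.eval_right ht, smul_eq_mul, ← mul_assoc, hcancel]) v
    have h4 : σ.eval (y 0 / ρ) (((ρ • σ.right) ^ m * W ρ) v) =
        g (Pi.single 0 (y 0)) * σ.eval (y 0 / ρ) v := by
      rw [hgy, smul_pow, smul_mul_assoc, _root_.smul_apply, map_smul, mul_apply_eq_comp,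
        ShiftData.eval_right_pow ht, h3, sub_zero, smul_eq_mul, smul_eq_mul, ← mul_assoc,
        ← mul_assoc, ← mul_pow, hcancel]
    change σ.eval (y 0 / ρ) (G (σ.coords ρ (Fin.tail y)) v - G (σ.coords ρ 0) v +
      ((ρ • σ.right) ^ m * W ρ) v) = _
    rw [map_add, map_sub, h1, h2, h4]
    ring
  have hevH : σ.eval (y 0 / ρ) (hx (Fin.tail y)) = h y := by
    have := hHφ (σ.coords ρ (Fin.tail y)) hyH y hyH' (σ.eval (y 0 / ρ))
      (fun i v => by simpa only [hy] using ShiftData.eval_coords ht ρ (Fin.tail y) i v) σ.unit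
    rwa [ShiftData.eval_unit ht, mul_one] at this
  have hrem : (σ.left ^ m) (rx (Fin.tail y)) = 0 := by
    have := congrArg (fun B : X →L[ℝ] X => B ((σ.left ^ m) (hx (Fin.tail y))))
      (Ring.mul_inverse_cancel _ hMy)
    rw [map_sub, sub_eq_zero]
    exact this.symm
  have hsum := congrArg (σ.eval (y 0 / ρ)) (σ.eq_sum_add m (rx (Fin.tail y)))
  rw [hrem, map_zero, add_zero, map_sum, map_sub, hevH, hevG, sub_eq_iff_eq_add'] at hsum
  rw [hsum, mul_comm]
  refine congrArg _ (Finset.sum_congr rfl fun i _ => ?_)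
  rw [map_smul, ShiftData.eval_right_pow ht, ShiftData.eval_unit ht, smul_eq_mul, mul_one, div_pow]
  ring

end Division

lemma AnalyticAt.comp_clm {m : ℕ} {g : (Fin m → ℝ) → ℝ} (hg : AnalyticAt ℝ g 0)
    (A : (Fin n → ℝ) →L[ℝ] (Fin m → ℝ)) : AnalyticAt ℝ (fun y => g (A y)) 0 :=
  AnalyticAt.fun_comp (by rwa [map_zero]) (A.analyticAt 0)

lemma coordDeriv_comp_clm {m : ℕ} {g : (Fin m → ℝ) → ℝ} (hg : AnalyticAt ℝ g 0)
    (A : (Fin n → ℝ) →L[ℝ] (Fin m → ℝ)) (j : Fin n) :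
    coordDeriv j (fun y => g (A y)) =ᶠ[𝓝 0]
      fun y => ∑ i, A (Pi.single j 1) i * coordDeriv i g (A y) := by
  have h : ∀ᶠ y in 𝓝 (0 : Fin n → ℝ), AnalyticAt ℝ g (A y) :=
    (A.continuous.tendsto' 0 0 (map_zero A)).eventually hg.eventually_analyticAt
  filter_upwards [h] with y hy
  have h1 : fderiv ℝ (fun y => g (A y)) y = (fderiv ℝ g (A y)).comp A :=
    (hy.differentiableAt.hasFDerivAt.comp y A.hasFDerivAt).fderiv
  rw [coordDeriv, h1, ContinuousLinearMap.comp_apply]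
  conv_lhs => rw [pi_eq_sum_univ' (A (Pi.single j 1))]
  simp [coordDeriv]

lemma germAlong_sum {E κ : Type*} (x : ι → E) (s : Finset κ) (g : κ → E → ℝ) :
    germAlong U x (fun y => ∑ k ∈ s, g k y) = ∑ k ∈ s, germAlong U x (g k) := by
  have := map_sum (Germ.coeRingHom (R := ℝ) (U : Filter ι)) (fun k i => g k (x i)) s
  rw [Germ.coe_coeRingHom] at this
  simp only [germAlong]
  rw [← this]
  congr
  funext i
  simp

lemma SatisfiesChainRule.comp_clm {m : ℕ}
    {D : Derivation ℤ (Germ (U : Filter ι) ℝ) (Germ (U : Filter ι) ℝ)} {x : ι → Fin n → ℝ}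
    (hx : Tendsto x U (𝓝 0)) (hD : SatisfiesChainRule U D x)
    (A : (Fin n → ℝ) →L[ℝ] (Fin m → ℝ)) : SatisfiesChainRule U D (fun i => A (x i)) := by
  have hcoord : ∀ i : Fin m, AnalyticAt ℝ (fun y : Fin m → ℝ => y i) 0 := fun i =>
    (ContinuousLinearMap.proj (R := ℝ) (φ := fun _ : Fin m => ℝ) i).analyticAt _
  have key : ∀ g : (Fin m → ℝ) → ℝ, AnalyticAt ℝ g 0 →
      D (germAlong U (fun i => A (x i)) g) =
        ∑ j, (∑ i, germAlong U x (fun _ => A (Pi.single j 1) i) *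
          germAlong U (fun i => A (x i)) (coordDeriv i g)) * D (germAlong U x fun y => y j) := by
    intro g hg
    refine (hD _ (hg.comp_clm A)).trans (Finset.sum_congr rfl fun j _ => ?_)
    rw [germAlong_congr hx (coordDeriv_comp_clm hg A j), germAlong_sum]
    rfl
  intro g hg
  rw [key g hg]
  have : ∀ i, D (germAlong U (fun i => A (x i)) fun y => y i) =
      ∑ j, germAlong U x (fun _ => A (Pi.single j 1) i) * D (germAlong U x fun y => y j) := by
    intro i
    rw [key _ (hcoord i)]
    simp [germAlong_coordDeriv_coord]
  simp only [this, Finset.sum_mul, Finset.mul_sum]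
  rw [Finset.sum_comm]
  refine Finset.sum_congr rfl fun i _ => Finset.sum_congr rfl fun j _ => ?_
  ring

lemma analyticValues_comp_clm_le {m : ℕ} (x : ι → Fin n → ℝ)
    (A : (Fin n → ℝ) →L[ℝ] (Fin m → ℝ)) :
    analyticValues U (fun i => A (x i)) ≤ analyticValues U x := by
  rintro _ ⟨g, hg, rfl⟩
  exact ⟨_, hg.comp_clm A, rfl⟩

variable (U) in
/-- The failure of the chain rule at a single function. -/
noncomputable def chainDefect
    (D : Derivation ℤ (Germ (U : Filter ι) ℝ) (Germ (U : Filter ι) ℝ))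
    (x : ι → Fin n → ℝ) (g : (Fin n → ℝ) → ℝ) : Germ (U : Filter ι) ℝ :=
  D (germAlong U x g) - ∑ j, germAlong U x (coordDeriv j g) * D (germAlong U x fun y => y j)

section Defect

variable {D : Derivation ℤ (Germ (U : Filter ι) ℝ) (Germ (U : Filter ι) ℝ)} {x : ι → Fin n → ℝ}

lemma chainDefect_congr (hx : Tendsto x U (𝓝 0)) {g h : (Fin n → ℝ) → ℝ} (hgh : g =ᶠ[𝓝 0] h) :
    chainDefect U D x g = chainDefect U D x h := by
  simp only [chainDefect, germAlong_congr hx hgh,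
    fun j => germAlong_congr hx (coordDeriv_congr hgh j)]

lemma chainDefect_add (hx : Tendsto x U (𝓝 0)) {g h : (Fin n → ℝ) → ℝ} (hg : AnalyticAt ℝ g 0)
    (hh : AnalyticAt ℝ h 0) : chainDefect U D x (fun y => g y + h y) =
      chainDefect U D x g + chainDefect U D x h := by
  have e : germAlong U x (fun y => g y + h y) = germAlong U x g + germAlong U x h := rfl
  have e' : ∀ j, germAlong U x (coordDeriv j fun y => g y + h y) =
      germAlong U x (coordDeriv j g) + germAlong U x (coordDeriv j h) := fun j =>
    germAlong_congr hx (coordDeriv_add hg hh j)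
  simp only [chainDefect, e, e', map_add, add_mul, Finset.sum_add_distrib]
  ring

lemma chainDefect_mul (hx : Tendsto x U (𝓝 0)) {g h : (Fin n → ℝ) → ℝ} (hg : AnalyticAt ℝ g 0)
    (hh : AnalyticAt ℝ h 0) : chainDefect U D x (fun y => g y * h y) =
      germAlong U x g * chainDefect U D x h + germAlong U x h * chainDefect U D x g := by
  have e : germAlong U x (fun y => g y * h y) = germAlong U x g * germAlong U x h := rfl
  have e' : ∀ j, germAlong U x (coordDeriv j fun y => g y * h y) =
      germAlong U x g * germAlong U x (coordDeriv j h) +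
        germAlong U x h * germAlong U x (coordDeriv j g) := fun j =>
    germAlong_congr hx (coordDeriv_mul hg hh j)
  simp only [chainDefect, e, e', Derivation.leibniz, add_mul, Finset.sum_add_distrib, smul_eq_mul,
    mul_sub, Finset.mul_sum, mul_assoc]
  ring

lemma chainDefect_coord (j : Fin n) : chainDefect U D x (fun y => y j) = 0 := by
  simp [chainDefect, germAlong_coordDeriv_coord]

variable (U D x) in
/-- The analytic functions satisfying the chain rule. -/
def chainRuleSubring (hx : Tendsto x U (𝓝 0)) : Subring ((Fin n → ℝ) → ℝ) where
  carrier := {g | AnalyticAt ℝ g 0 ∧ chainDefect U D x g = 0}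
  mul_mem' := fun hg hh => ⟨hg.1.mul hh.1,
    (chainDefect_mul hx hg.1 hh.1).trans (by rw [hg.2, hh.2]; simp)⟩
  add_mem' := fun hg hh => ⟨hg.1.add hh.1,
    (chainDefect_add hx hg.1 hh.1).trans (by rw [hg.2, hh.2]; simp)⟩
  one_mem' := ⟨analyticAt_const, by
    have h := chainDefect_mul (D := D) hx (g := fun _ => 1) (h := fun _ => 1) analyticAt_const
      analyticAt_const
    simp only [mul_one] at h
    have e : germAlong U x (fun _ => 1) = 1 := rfl
    rw [e, one_mul] at h
    exact left_eq_add.1 h⟩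
  zero_mem' := ⟨analyticAt_const, by
    have h := chainDefect_add (D := D) hx (g := fun _ => 0) (h := fun _ => 0) analyticAt_const
      analyticAt_const
    simp only [add_zero] at h
    exact left_eq_add.1 h⟩
  neg_mem' := by
    intro g hg
    refine ⟨hg.1.neg, ?_⟩
    have h := chainDefect_add (D := D) hx hg.1 hg.1.neg
    have h0 := chainDefect_add (D := D) hx (g := fun _ => 0) (h := fun _ => 0) analyticAt_const
      analyticAt_const
    simp only [add_zero] at h0
    simp only [Pi.neg_apply, add_neg_cancel, left_eq_add.1 h0, hg.2, zero_add] at h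
    exact h.symm

end Defect

section Tail

variable {x : ι → Fin (n + 1) → ℝ}

lemma tendsto_tail (hx : Tendsto x U (𝓝 0)) : Tendsto (fun i => Fin.tail (x i)) U (𝓝 0) :=
  ((tailCLM n).continuous.tendsto' 0 0 (map_zero _)).comp hx

lemma chainDefect_tail {D : Derivation ℤ (Germ (U : Filter ι) ℝ) (Germ (U : Filter ι) ℝ)}
    (hx : Tendsto x U (𝓝 0)) (hD : SatisfiesChainRule U D fun i => Fin.tail (x i))
    {r : (Fin n → ℝ) → ℝ} (hr : AnalyticAt ℝ r 0) :
    chainDefect U D x (fun y => r (Fin.tail y)) = 0 := by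
  have h0 : germAlong U x (coordDeriv 0 fun y => r (Fin.tail y)) = 0 := by
    refine germAlong_congr (h := fun _ => 0) hx
      ((coordDeriv_comp_clm hr (tailCLM n) 0).trans (Eventually.of_forall fun y => ?_))
    simp [tailCLM_apply, Fin.tail]
  have hs : ∀ j : Fin n, germAlong U x (coordDeriv j.succ fun y => r (Fin.tail y)) =
      germAlong U (fun i => Fin.tail (x i)) (coordDeriv j r) := by
    intro j
    refine germAlong_congr (h := fun y => coordDeriv j r (Fin.tail y)) hx
      ((coordDeriv_comp_clm hr (tailCLM n) j.succ).trans (Eventually.of_forall fun y => ?_))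
    simp [tailCLM_apply, Fin.tail, Pi.single_apply]
  rw [chainDefect, Fin.sum_univ_succ, h0, zero_mul, zero_add, sub_eq_zero]
  simp only [hs]
  exact hD r hr

variable {g : (Fin (n + 1) → ℝ) → ℝ}

/-- A regular analytic relation can be replaced by a monic polynomial relation. -/
lemma exists_monic_relation (hx : Tendsto x U (𝓝 0)) (hg : AnalyticAt ℝ g 0)
    (hreg : ¬ ∀ᶠ t in 𝓝 (0 : ℝ), g (Pi.single 0 t) = 0) (hgx : germAlong U x g = 0) :
    ∃ (m : ℕ) (r : Fin m → (Fin n → ℝ) → ℝ), (∀ i, AnalyticAt ℝ (r i) 0) ∧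
      germAlong U x (fun y => y 0 ^ m - ∑ i, r i (Fin.tail y) * y 0 ^ (i : ℕ)) = 0 := by
  obtain ⟨m, hm⟩ := weierstrass_division hg hreg
  obtain ⟨q, r, hq, hr, h⟩ := hm (fun y => y 0 ^ m)
    (((ContinuousLinearMap.proj (R := ℝ) (φ := fun _ : Fin (n + 1) => ℝ) 0).analyticAt _).pow m)
  refine ⟨m, r, hr, ?_⟩
  rw [germAlong_congr hx (h := fun y => q y * g y) (by
    filter_upwards [h] with y hy
    rw [hy]; ring)]
  change germAlong U x q * germAlong U x g = 0
  rw [hgx, mul_zero]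

lemma not_eventually_monic_eq_zero {m : ℕ} (r : Fin m → (Fin n → ℝ) → ℝ) :
    ¬ ∀ᶠ t in 𝓝 (0 : ℝ), (fun y : Fin (n + 1) → ℝ => y 0 ^ m -
      ∑ i, r i (Fin.tail y) * y 0 ^ (i : ℕ)) (Pi.single 0 t) = 0 := by
  intro h
  let P : Polynomial ℝ := Polynomial.X ^ m -
    ∑ i : Fin m, Polynomial.C (r i 0) * Polynomial.X ^ (i : ℕ)
  have htail : ∀ t : ℝ, Fin.tail (Pi.single 0 t : Fin (n + 1) → ℝ) = 0 := by
    intro t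
    ext j
    simp [Fin.tail]
  have hP : P.Monic :=
    Polynomial.monic_X_pow_sub (Polynomial.degree_sum_fin_lt fun i => r i 0)
  have hroot : ∀ᶠ t in 𝓝 (0 : ℝ), t ∈ (P.roots.toFinset : Set ℝ) := by
    filter_upwards [h] with t ht
    simp only [Finset.mem_coe, Multiset.mem_toFinset, Polynomial.mem_roots hP.ne_zero]
    simpa [P, htail, Polynomial.IsRoot.def, Polynomial.eval_finsetSum] using ht
  exact (infinite_of_mem_nhds (0 : ℝ) hroot) (Finset.finite_toSet _)

lemma SatisfiesChainRule.of_tail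
    {D : Derivation ℤ (Germ (U : Filter ι) ℝ) (Germ (U : Filter ι) ℝ)}
    (hx : Tendsto x U (𝓝 0)) (hg : AnalyticAt ℝ g 0)
    (hreg : ¬ ∀ᶠ t in 𝓝 (0 : ℝ), g (Pi.single 0 t) = 0) (hgx : germAlong U x g = 0)
    (hD : SatisfiesChainRule U D fun i => Fin.tail (x i)) : SatisfiesChainRule U D x := by
  have h0 : (fun y : Fin (n + 1) → ℝ => y 0) ∈ chainRuleSubring U D x hx :=
    ⟨(ContinuousLinearMap.proj (R := ℝ) (φ := fun _ : Fin (n + 1) => ℝ) 0).analyticAt _,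
      chainDefect_coord 0⟩
  have hpoly : ∀ {m : ℕ} (r : Fin m → (Fin n → ℝ) → ℝ), (∀ i, AnalyticAt ℝ (r i) 0) →
      (fun y : Fin (n + 1) → ℝ => ∑ i, r i (Fin.tail y) * y 0 ^ (i : ℕ)) ∈
        chainRuleSubring U D x hx := by
    intro m r hr
    have : (∑ i, (fun y : Fin (n + 1) → ℝ => r i (Fin.tail y)) * (fun y => y 0) ^ (i : ℕ)) ∈
        chainRuleSubring U D x hx :=
      sum_mem fun i _ => mul_mem ⟨(hr i).comp_clm (tailCLM n), chainDefect_tail hx hD (hr i)⟩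
        (pow_mem h0 _)
    convert! this using 1
    funext y
    simp
  obtain ⟨m, r, hr, hW⟩ := exists_monic_relation hx hg hreg hgx
  have hWmem := sub_mem (pow_mem h0 m) (hpoly r hr)
  obtain ⟨k, hk⟩ := weierstrass_division hWmem.1 (not_eventually_monic_eq_zero r)
  intro h hh
  obtain ⟨q, s, hq, hs, hdiv⟩ := hk h hh
  refine sub_eq_zero.1 (?_ : chainDefect U D x h = 0)
  rw [chainDefect_congr hx hdiv]
  refine (chainDefect_add hx (hq.mul hWmem.1) (hpoly s hs).1).trans ?_
  rw [(hpoly s hs).2, add_zero]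
  refine (chainDefect_mul hx hq hWmem.1).trans ?_
  rw [hWmem.2, mul_zero, zero_add]
  exact mul_eq_zero_of_left hW _

lemma isAlgebraic_tail (hx : Tendsto x U (𝓝 0)) (hg : AnalyticAt ℝ g 0)
    (hreg : ¬ ∀ᶠ t in 𝓝 (0 : ℝ), g (Pi.single 0 t) = 0) (hgx : germAlong U x g = 0)
    {u : Germ (U : Filter ι) ℝ} (hu : IsAlgebraic (analyticValues U x) u) :
    IsAlgebraic (analyticValues U fun i => Fin.tail (x i)) u := by
  let S := analyticValues U fun i => Fin.tail (x i)
  have hcoef : ∀ {r : (Fin n → ℝ) → ℝ}, AnalyticAt ℝ r 0 →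
      germAlong U x (fun y => r (Fin.tail y)) ∈ S := fun {r} hr => ⟨r, hr, rfl⟩
  have hsum : ∀ {m : ℕ} (r : Fin m → (Fin n → ℝ) → ℝ),
      germAlong U x (fun y => ∑ i, r i (Fin.tail y) * y 0 ^ (i : ℕ)) =
        ∑ i, germAlong U x (fun y => r i (Fin.tail y)) * germAlong U x (fun y => y 0) ^ (i : ℕ) :=
    fun r => germAlong_sum x _ _
  obtain ⟨m, r, hr, hW⟩ := exists_monic_relation hx hg hreg hgx
  have h0 : IsIntegral S (germAlong U x fun y => y 0) := by
    let c : Fin m → S := fun i => ⟨_, hcoef (hr i)⟩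
    have hmonic := Polynomial.monic_X_pow_sub (Polynomial.degree_sum_fin_lt c)
    refine ⟨_, hmonic, ?_⟩
    have hW' : germAlong U x (fun y => y 0) ^ m -
        germAlong U x (fun y => ∑ i, r i (Fin.tail y) * y 0 ^ (i : ℕ)) = 0 := hW
    rw [hsum] at hW'
    simp only [Polynomial.eval₂_sub, Polynomial.eval₂_finsetSum, Polynomial.eval₂_mul,
      Polynomial.eval₂_C, Polynomial.eval₂_pow, Polynomial.eval₂_X]
    exact hW'
  have hintegral : ∀ a : analyticValues U x, IsIntegral S (a : Germ (U : Filter ι) ℝ) := by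
    rintro ⟨_, h, hh, rfl⟩
    obtain ⟨k, hk⟩ := weierstrass_division hg hreg
    obtain ⟨q, s, hq, hs, hdiv⟩ := hk h hh
    change IsIntegral S (germAlong U x h)
    have e : germAlong U x h = germAlong U x q * germAlong U x g +
        germAlong U x (fun y => ∑ i, s i (Fin.tail y) * y 0 ^ (i : ℕ)) := germAlong_congr hx hdiv
    rw [e, hgx, mul_zero, zero_add, hsum]
    exact IsIntegral.sum _ fun i _ =>
      (isIntegral_algebraMap (x := (⟨_, hcoef (hs i)⟩ : S))).mul (h0.pow _)
  have hle : S ≤ analyticValues U x := analyticValues_comp_clm_le x (tailCLM n)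
  let _ : Algebra S (analyticValues U x) := (Subring.inclusion hle).toAlgebra
  have : IsScalarTower S (analyticValues U x) (Germ (U : Filter ι) ℝ) :=
    IsScalarTower.of_algebraMap_eq fun _ => rfl
  have : Algebra.IsAlgebraic S (analyticValues U x) := ⟨fun a =>
    (isAlgebraic_algebraMap_iff (A := Germ (U : Filter ι) ℝ) Subtype.val_injective).1
      (hintegral a).isAlgebraic⟩
  exact hu.restrictScalars S

end Tail

lemma exists_regular_direction {E : Type*} [NormedAddCommGroup E] [NormedSpace ℝ E] {g : E → ℝ}
    (hg : AnalyticAt ℝ g 0) (hg0 : ¬ g =ᶠ[𝓝 0] 0) (hg00 : g 0 = 0) :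
    ∃ v : E, v ≠ 0 ∧ ¬ ∀ᶠ t in 𝓝 (0 : ℝ), g (t • v) = 0 := by
  obtain ⟨r, hr, hball⟩ := Metric.eventually_nhds_iff_ball.1 hg.eventually_analyticAt
  obtain ⟨v, hv, hgv⟩ : ∃ v ∈ Metric.ball (0 : E) r, g v ≠ 0 := by
    by_contra! hcon
    exact hg0 (Metric.eventually_nhds_iff_ball.2 ⟨r, hr, hcon⟩)
  refine ⟨v, fun h => hgv (h ▸ hg00), fun hev => hgv ?_⟩
  have han : AnalyticOnNhd ℝ (fun t : ℝ => g (t • v)) (Set.Icc 0 1) := by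
    intro t ht
    refine AnalyticAt.fun_comp (hball _ ?_) (analyticAt_id.smul analyticAt_const)
    rw [mem_ball_zero_iff] at hv ⊢
    rw [norm_smul, Real.norm_of_nonneg ht.1]
    exact (mul_le_of_le_one_left (norm_nonneg v) ht.2).trans_lt hv
  have := han.eqOn_zero_of_preconnected_of_eventuallyEq_zero isPreconnected_Icc
    (Set.left_mem_Icc.2 zero_le_one) hev (Set.right_mem_Icc.2 zero_le_one)
  simpa using this

theorem isAlgebraicOverReal_of_derivation_eq_zero {x : ι → Fin n → ℝ} (hx : Tendsto x U (𝓝 0))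
    {u : Germ (U : Filter ι) ℝ} (hu : IsAlgebraic (analyticValues U x) u)
    (hD : ∀ D, SatisfiesChainRule U D x → D u = 0) : IsAlgebraicOverReal U u := by
  induction n with
  | zero =>
    refine AnalyticallyIndependent.isAlgebraicOverReal hx (fun g _ h => ?_) hu hD
    obtain ⟨i, hi⟩ := (Germ.coe_eq.1 (h.trans Germ.coe_zero.symm)).exists
    exact Eventually.of_forall fun y => (congrArg g (Subsingleton.elim _ _)).trans hi
  | succ n ih =>
    by_cases hi : AnalyticallyIndependent U x
    · exact hi.isAlgebraicOverReal hx hu hD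
    simp only [AnalyticallyIndependent, not_forall] at hi
    obtain ⟨g, hg, hgx, hg0⟩ := hi
    have hg00 : g 0 = 0 := by
      have h1 : Tendsto (fun i => g (x i)) U (𝓝 (g 0)) := hg.continuousAt.tendsto.comp hx
      have h2 : (fun i => g (x i)) =ᶠ[U] fun _ => 0 := Germ.coe_eq.1 hgx
      exact tendsto_nhds_unique (h1.congr' h2) tendsto_const_nhds
    obtain ⟨v, hv, hreg⟩ := exists_regular_direction hg hg0 hg00
    obtain ⟨A, hA⟩ := SeparatingDual.exists_continuousLinearEquiv_apply_eq (R := ℝ)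
      (x := (Pi.single 0 1 : Fin (n + 1) → ℝ)) (by simp) hv
    let x' : ι → Fin (n + 1) → ℝ := fun i => A.symm (x i)
    have hx' : Tendsto x' U (𝓝 0) := (A.symm.continuous.tendsto' 0 0 (map_zero _)).comp hx
    have hxA : (fun i => (A : (Fin (n + 1) → ℝ) →L[ℝ] (Fin (n + 1) → ℝ)) (x' i)) = x := by
      funext i
      simp [x']
    have hvalues : analyticValues U x' = analyticValues U x := by
      refine le_antisymm (analyticValues_comp_clm_le x
        (A.symm : (Fin (n + 1) → ℝ) →L[ℝ] (Fin (n + 1) → ℝ))) ?_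
      conv_lhs => rw [← hxA]
      exact analyticValues_comp_clm_le x' _
    have hgA : AnalyticAt ℝ (fun y => g (A y)) 0 :=
      hg.comp_clm (A : (Fin (n + 1) → ℝ) →L[ℝ] (Fin (n + 1) → ℝ))
    have hregA : ¬ ∀ᶠ t in 𝓝 (0 : ℝ), (fun y => g (A y)) (Pi.single 0 t) = 0 := by
      refine fun h => hreg (h.mono fun t ht => ?_)
      have : (Pi.single 0 t : Fin (n + 1) → ℝ) = t • Pi.single 0 1 := by
        rw [← Pi.single_smul]; simp
      simpa [this, hA] using ht
    have hgx' : germAlong U x' (fun y => g (A y)) = 0 := by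
      rw [← hgx, ← hxA]
      rfl
    rw [← hvalues] at hu
    refine ih (tendsto_tail hx') (isAlgebraic_tail hx' hgA hregA hgx' hu) fun D hDtail => hD D ?_
    rw [← hxA]
    exact (SatisfiesChainRule.of_tail hx' hgA hregA hgx' hDtail).comp_clm hx' _

/-- Singular points of a real analytic germ with singular origin lie in the
zero level, as germs at the origin. -/
theorem singular_points_in_zero_level (n : ℕ) (f : (Fin n → ℝ) → ℝ)
    (hf : ∀ᶠ x in nhds (0 : Fin n → ℝ), AnalyticAt ℝ f x)
    (hf0 : f 0 = 0)
    (hsing : fderiv ℝ f 0 = 0) :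
    ∃ U ∈ nhds (0 : Fin n → ℝ), ∀ x ∈ U, fderiv ℝ f x = 0 → f x = 0 := by
  refine ⟨{x | fderiv ℝ f x = 0 → f x = 0}, ?_, fun x hx => hx⟩
  by_contra hcon
  have hfreq : ∃ᶠ x in 𝓝 (0 : Fin n → ℝ), fderiv ℝ f x = 0 ∧ f x ≠ 0 := by
    refine fun h => hcon (h.mono fun x hx hx' => ?_)
    by_contra hne
    exact hx ⟨hx', hne⟩
  have : (𝓝 (0 : Fin n → ℝ) ⊓ 𝓟 {x | fderiv ℝ f x = 0 ∧ f x ≠ 0}).NeBot :=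
    frequently_mem_iff_neBot.1 hfreq
  let U := Ultrafilter.of (𝓝 (0 : Fin n → ℝ) ⊓ 𝓟 {x | fderiv ℝ f x = 0 ∧ f x ≠ 0})
  have hU : (U : Filter (Fin n → ℝ)) ≤ 𝓝 0 ⊓ 𝓟 {x | fderiv ℝ f x = 0 ∧ f x ≠ 0} :=
    Ultrafilter.of_le _
  have hx : Tendsto (fun y : Fin n → ℝ => y) U (𝓝 0) := hU.trans inf_le_left
  have hcrit : ∀ᶠ y in (U : Filter (Fin n → ℝ)), fderiv ℝ f y = 0 ∧ f y ≠ 0 :=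
    (hU.trans inf_le_right) (mem_principal_self _)
  have hfa : AnalyticAt ℝ f 0 := hf.self_of_nhds
  obtain ⟨P, hP, hPf⟩ := isAlgebraicOverReal_of_derivation_eq_zero hx
    (u := germAlong U (fun y => y) f)
    (isAlgebraic_algebraMap
      (⟨_, f, hfa, rfl⟩ : analyticValues U (fun y : Fin n → ℝ => y)))
    (fun D hD => by
      rw [hD f hfa]
      refine Finset.sum_eq_zero fun j _ => mul_eq_zero_of_left ?_ _
      refine Germ.coe_eq.2 (hcrit.mono fun y hy => ?_)
      simp [coordDeriv, hy.1])
  have hroot : ∀ᶠ y in (U : Filter (Fin n → ℝ)), P.eval (f y) = 0 := by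
    have h := Polynomial.hom_eval₂ P (Pi.constRingHom (Fin n → ℝ) ℝ)
      (Germ.coeRingHom (U : Filter (Fin n → ℝ))) (fun y => f y)
    have h' := h.trans hPf
    refine (Germ.coe_eq.1 (h'.trans Germ.coe_zero.symm)).mono fun y hy => ?_
    have h2 := Polynomial.hom_eval₂ P (Pi.constRingHom (Fin n → ℝ) ℝ)
      (Pi.evalRingHom (fun _ : Fin n → ℝ => ℝ) y) (fun y => f y)
    have h3 : (Pi.evalRingHom (fun _ : Fin n → ℝ => ℝ) y).comp (Pi.constRingHom (Fin n → ℝ) ℝ) =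
        RingHom.id ℝ := rfl
    rw [h3] at h2
    exact h2.symm.trans hy
  have hlim : Tendsto f U (𝓝 0) := by
    have := hfa.continuousAt.tendsto.comp hx
    rwa [hf0] at this
  have hfin : ∀ᶠ s in 𝓝 (0 : ℝ), s ∉ P.roots.toFinset.erase 0 :=
    (P.roots.toFinset.erase 0).finite_toSet.isClosed.isOpen_compl.mem_nhds (by simp)
  obtain ⟨y, ⟨⟨-, hy0⟩, hyP⟩, hyn⟩ := ((hcrit.and hroot).and (hlim.eventually hfin)).exists
  refine hyn ?_
  simp [hy0, hP, hyP]
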